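/- Define the rational functions of s ∈ ℂ: t(s) = (1−3s²)(3s²+3s+1)²/(2s+1)³ and y(s) = (3s²+2s+1)(3s²+3s+1)/((2s+1)(3s+1)). Then for every s ∈ ℂ such that 2s+1 ≠ 0, 3s+1 ≠ 0, t'(s) ≠ 0, t(s) ∉ {0,1}, and y(s) ∉ {0, 1, t(s)}, the pair (t, y) is a parametric solution of the sixth Painlevé equation PVI(α,β,γ,δ) at s with θ-tuple (θ₀, θ₁, θ_t, θ_∞) = (1/3, 1/2, 1/3, 1/2), i.e. α = 1/8, β = −1/18, γ = 1/8, δ = 4/9. -/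

import Mathlib

noncomputable def tFun9 : ℂ → ℂ := fun s => (1-3*s^2)*(3*s^2+3*s+1)^2/(2*s+1)^3

noncomputable def yFun9 : ℂ → ℂ := fun s => (3*s^2+2*s+1)*(3*s^2+3*s+1)/((2*s+1)*(3*s+1))

/-!
Each of `t`, `t - 1`, `y`, `y - 1`, `y - t` and `t'` is, up to a constant, a product of powers of
the polynomials `s`, `n = s + 1`, `K = 3s + 2`, `L = 2s + 1`, `M = 3s + 1`, `a = 1 - 3s²`,
`b = 3s² + 3s + 1`, `c = 3s² + 2s + 1`, `r = 9s² + 10s + 3`, all nonzero at an admissible `s`.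
The slope `p = y'/t'` and its derivative involve only two further polynomials, `Q` and `P`, in
their numerators. Treating the nine factors as independent nonzero elements of a field and clearing
denominators, PVI becomes a single polynomial identity between the factors, `Q` and `P`.
-/

namespace PainleveVI

/-- The right-hand side of the sixth Painlevé equation `PVI(α, β, γ, δ)` solved for `y''`, as a
function of `t`, `y` and `p = y'`. -/
def rhs {F : Type*} [Field F] (α β γ δ t y p : F) : F :=
  (1 / 2) * (1 / y + 1 / (y - 1) + 1 / (y - t)) * p ^ 2
    - (1 / t + 1 / (t - 1) + 1 / (y - t)) * p
    + (y * (y - 1) * (y - t) / (t ^ 2 * (t - 1) ^ 2)) *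
      (α + β * t / y ^ 2 + γ * (t - 1) / (y - 1) ^ 2 + δ * t * (t - 1) / (y - t) ^ 2)

section ClearedEquation

variable {R : Type*} [CommRing R]

/-- The polynomial `Q` for which `3sQ` is the numerator of `y'`, hence `Q` the nontrivial factor of
the numerator of the slope `p = y'/t'`. -/
def slopeNum (s : R) : R := 36 * s ^ 4 + 75 * s ^ 3 + 62 * s ^ 2 + 25 * s + 4

/-- The polynomial `P`, the nontrivial factor of the numerator of the derivative of the slope
`p = y'/t'`. -/
def slopeDerivNum (s : R) : R :=
  1944 * s ^ 8 + 7128 * s ^ 7 + 12150 * s ^ 6 + 12375 * s ^ 5 + 8094 * s ^ 4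
    + 3423 * s ^ 3 + 900 * s ^ 2 + 132 * s + 8

/-- PVI with parameters `(1/8, -1/18, 1/8, 4/9)` after clearing denominators, as a relation between
the factors `s, n, K, L, M, a, b, c, r` and the numerators `Q` and `P`. The terms on the right come
from the `p²` term, the `p` term and the `p`-free term of the equation. -/
def ClearedEquation (s n K L M a b c r Q P : R) : Prop :=
  -2 * n ^ 2 * a ^ 2 * c * r * P =
    a ^ 2 * (3 * s ^ 2 * n * K * r + b * c * r + 3 * n * c * L ^ 2) * Q ^ 2
      + 12 * n * M * a * c * (s ^ 3 * K ^ 3 * r - a * b ^ 2 * r + M * s * K ^ 2 * a * b) * Q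
      + s * K * b * L *
          (9 * s * L * c ^ 2 * n ^ 2 * r ^ 2 - 4 * a * s * M ^ 2 * n ^ 2 * r ^ 2
            - K * M ^ 2 * c ^ 2 * r ^ 2 - 32 * a * K * M ^ 2 * L * c ^ 2 * n ^ 2)

theorem clearedEquation_factors (s : R) :
    ClearedEquation s (s + 1) (3 * s + 2) (2 * s + 1) (3 * s + 1) (1 - 3 * s ^ 2)
      (3 * s ^ 2 + 3 * s + 1) (3 * s ^ 2 + 2 * s + 1) (9 * s ^ 2 + 10 * s + 3)
      (slopeNum s) (slopeDerivNum s) := by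
  simp only [ClearedEquation, slopeNum, slopeDerivNum]
  ring

end ClearedEquation

section Coefficients

variable {F : Type*} [Field F] {s n K L M a b c r Q P t y : F}

theorem sq_coeff_eq [CharZero F] (hs : s ≠ 0) (hn : n ≠ 0) (hK : K ≠ 0) (hL : L ≠ 0)
    (hM : M ≠ 0) (hb : b ≠ 0) (hc : c ≠ 0) (hr : r ≠ 0)
    (hy : y = c * b / (L * M)) (hy1 : y - 1 = 3 * s ^ 2 * n * K / (L * M))
    (hyt : y - t = s ^ 2 * K * b * r / (L ^ 3 * M)) :
    1 / y + 1 / (y - 1) + 1 / (y - t) =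
      L * M * (3 * s ^ 2 * n * K * r + b * c * r + 3 * n * c * L ^ 2) /
        (3 * s ^ 2 * n * K * b * c * r) := by
  rw [hy1, hyt, hy]
  field_simp

theorem linear_coeff_eq (hs : s ≠ 0) (hK : K ≠ 0) (hL : L ≠ 0) (ha : a ≠ 0) (hb : b ≠ 0)
    (hr : r ≠ 0)
    (ht : t = a * b ^ 2 / L ^ 3) (ht1 : t - 1 = -(s ^ 3 * K ^ 3) / L ^ 3)
    (hyt : y - t = s ^ 2 * K * b * r / (L ^ 3 * M)) :
    1 / t + 1 / (t - 1) + 1 / (y - t) =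
      L ^ 3 * (s ^ 3 * K ^ 3 * r - a * b ^ 2 * r + M * s * K ^ 2 * a * b) /
        (s ^ 3 * K ^ 3 * a * b ^ 2 * r) := by
  rw [ht1, hyt, ht]
  field_simp
  ring

theorem constant_coeff_eq [CharZero F] (hs : s ≠ 0) (hn : n ≠ 0) (hK : K ≠ 0) (hL : L ≠ 0)
    (hM : M ≠ 0) (ha : a ≠ 0) (hb : b ≠ 0) (hc : c ≠ 0) (hr : r ≠ 0)
    (ht : t = a * b ^ 2 / L ^ 3) (ht1 : t - 1 = -(s ^ 3 * K ^ 3) / L ^ 3)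
    (hy : y = c * b / (L * M)) (hy1 : y - 1 = 3 * s ^ 2 * n * K / (L * M))
    (hyt : y - t = s ^ 2 * K * b * r / (L ^ 3 * M)) :
    y * (y - 1) * (y - t) / (t ^ 2 * (t - 1) ^ 2) *
        (1 / 8 + -1 / 18 * t / y ^ 2 + 1 / 8 * (t - 1) / (y - 1) ^ 2
          + 4 / 9 * t * (t - 1) / (y - t) ^ 2) =
      L ^ 6 *
          (9 * s * L * c ^ 2 * n ^ 2 * r ^ 2 - 4 * a * s * M ^ 2 * n ^ 2 * r ^ 2
            - K * M ^ 2 * c ^ 2 * r ^ 2 - 32 * a * K * M ^ 2 * L * c ^ 2 * n ^ 2) /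
        (24 * s ^ 3 * n * K ^ 4 * M ^ 3 * a ^ 2 * b ^ 2 * c * r) := by
  rw [ht1, hy1, hyt, ht, hy]
  field_simp
  ring

theorem ClearedEquation.eq_rhs [CharZero F] (h : ClearedEquation s n K L M a b c r Q P)
    (hs : s ≠ 0) (hn : n ≠ 0) (hK : K ≠ 0) (hL : L ≠ 0) (hM : M ≠ 0) (ha : a ≠ 0) (hb : b ≠ 0)
    (hc : c ≠ 0) (hr : r ≠ 0)
    (ht : t = a * b ^ 2 / L ^ 3) (ht1 : t - 1 = -(s ^ 3 * K ^ 3) / L ^ 3)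
    (hy : y = c * b / (L * M)) (hy1 : y - 1 = 3 * s ^ 2 * n * K / (L * M))
    (hyt : y - t = s ^ 2 * K * b * r / (L ^ 3 * M)) :
    n * L * P / (2 * s ^ 2 * K ^ 3 * M ^ 3 * b ^ 2) / (-6 * s ^ 2 * K ^ 2 * b / L ^ 4) =
      rhs (1 / 8) (-1 / 18) (1 / 8) (4 / 9) t y (-(L ^ 2 * Q) / (2 * s * K ^ 2 * b * M ^ 2)) := by
  rw [rhs, sq_coeff_eq hs hn hK hL hM hb hc hr hy hy1 hyt,
    linear_coeff_eq hs hK hL ha hb hr ht ht1 hyt,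
    constant_coeff_eq hs hn hK hL hM ha hb hc hr ht ht1 hy hy1 hyt]
  unfold ClearedEquation at h
  field_simp
  linear_combination 144 * h

end Coefficients

section Factorization

variable {s : ℂ}

theorem tFun9_sub_one (hL : 2 * s + 1 ≠ 0) :
    tFun9 s - 1 = -(s ^ 3 * (3 * s + 2) ^ 3) / (2 * s + 1) ^ 3 := by
  rw [tFun9, div_sub_one (pow_ne_zero 3 hL)]
  ring

theorem yFun9_sub_one (hL : 2 * s + 1 ≠ 0) (hM : 3 * s + 1 ≠ 0) :
    yFun9 s - 1 = 3 * s ^ 2 * (s + 1) * (3 * s + 2) / ((2 * s + 1) * (3 * s + 1)) := by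
  rw [yFun9, div_sub_one (mul_ne_zero hL hM)]
  ring

theorem yFun9_sub_tFun9 (hL : 2 * s + 1 ≠ 0) (hM : 3 * s + 1 ≠ 0) :
    yFun9 s - tFun9 s =
      s ^ 2 * (3 * s + 2) * (3 * s ^ 2 + 3 * s + 1) * (9 * s ^ 2 + 10 * s + 3) /
        ((2 * s + 1) ^ 3 * (3 * s + 1)) := by
  rw [yFun9, tFun9, div_sub_div _ _ (mul_ne_zero hL hM) (pow_ne_zero 3 hL),
    div_eq_div_iff (by simp [*]) (by simp [*])]
  ring

theorem tFun9_ne_zero_iff (hL : 2 * s + 1 ≠ 0) :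
    tFun9 s ≠ 0 ↔ 1 - 3 * s ^ 2 ≠ 0 ∧ 3 * s ^ 2 + 3 * s + 1 ≠ 0 := by
  simp [tFun9, hL]

theorem tFun9_ne_one_iff (hL : 2 * s + 1 ≠ 0) : tFun9 s ≠ 1 ↔ s ≠ 0 ∧ 3 * s + 2 ≠ 0 := by
  rw [← sub_ne_zero, tFun9_sub_one hL]
  simp [hL]

theorem yFun9_ne_zero_iff (hL : 2 * s + 1 ≠ 0) (hM : 3 * s + 1 ≠ 0) :
    yFun9 s ≠ 0 ↔ 3 * s ^ 2 + 2 * s + 1 ≠ 0 ∧ 3 * s ^ 2 + 3 * s + 1 ≠ 0 := by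
  simp [yFun9, hL, hM]

theorem yFun9_ne_one_iff (hL : 2 * s + 1 ≠ 0) (hM : 3 * s + 1 ≠ 0) :
    yFun9 s ≠ 1 ↔ s ≠ 0 ∧ s + 1 ≠ 0 ∧ 3 * s + 2 ≠ 0 := by
  rw [← sub_ne_zero, yFun9_sub_one hL hM]
  simp [hL, hM, and_assoc]

theorem yFun9_ne_tFun9_iff (hL : 2 * s + 1 ≠ 0) (hM : 3 * s + 1 ≠ 0) :
    yFun9 s ≠ tFun9 s ↔
      s ≠ 0 ∧ 3 * s + 2 ≠ 0 ∧ 3 * s ^ 2 + 3 * s + 1 ≠ 0 ∧ 9 * s ^ 2 + 10 * s + 3 ≠ 0 := by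
  rw [← sub_ne_zero, yFun9_sub_tFun9 hL hM]
  simp [hL, hM, and_assoc]

end Factorization

section PolynomialDerivatives

variable {𝕜 : Type*} [NontriviallyNormedField 𝕜]

theorem hasDerivAt_linear (a b x : 𝕜) : HasDerivAt (fun u => a * u + b) a x := by
  simpa using ((hasDerivAt_id' x).const_mul a).add_const b

theorem hasDerivAt_quadratic (a b c x : 𝕜) :
    HasDerivAt (fun u => a * u ^ 2 + b * u + c) (2 * a * x + b) x := by
  refine ((((hasDerivAt_pow 2 x).const_mul a).add
    ((hasDerivAt_id' x).const_mul b)).add_const c).congr_deriv ?_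
  push_cast
  ring

theorem hasDerivAt_slopeNum (x : 𝕜) :
    HasDerivAt slopeNum (144 * x ^ 3 + 225 * x ^ 2 + 124 * x + 25) x := by
  refine ((((((hasDerivAt_pow 4 x).const_mul 36).add ((hasDerivAt_pow 3 x).const_mul 75)).add
    ((hasDerivAt_pow 2 x).const_mul 62)).add
    ((hasDerivAt_id' x).const_mul 25)).add_const 4).congr_deriv ?_
  push_cast
  ring

end PolynomialDerivatives

section Slope

variable {s : ℂ}

theorem hasDerivAt_tFun9 (hL : 2 * s + 1 ≠ 0) :
    HasDerivAt tFun9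
      (-6 * s ^ 2 * (3 * s + 2) ^ 2 * (3 * s ^ 2 + 3 * s + 1) / (2 * s + 1) ^ 4) s := by
  have hnum := (((hasDerivAt_pow 2 s).const_mul 3).const_sub 1).mul
    ((hasDerivAt_quadratic 3 3 1 s).pow 2)
  have hden := (hasDerivAt_linear 2 1 s).pow 3
  refine (hnum.div hden (pow_ne_zero 3 hL)).congr_deriv ?_
  simp only [Pi.mul_apply, Pi.pow_apply]
  rw [div_eq_div_iff (by simp [hL]) (by simp [hL])]
  push_cast
  ring

theorem hasDerivAt_yFun9 (hL : 2 * s + 1 ≠ 0) (hM : 3 * s + 1 ≠ 0) :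
    HasDerivAt yFun9 (3 * s * slopeNum s / ((2 * s + 1) ^ 2 * (3 * s + 1) ^ 2)) s := by
  have hnum := (hasDerivAt_quadratic 3 2 1 s).mul (hasDerivAt_quadratic 3 3 1 s)
  have hden := (hasDerivAt_linear 2 1 s).mul (hasDerivAt_linear 3 1 s)
  refine (hnum.div hden (mul_ne_zero hL hM)).congr_deriv ?_
  simp only [Pi.mul_apply, slopeNum]
  rw [div_eq_div_iff (by simp [hL, hM]) (by simp [hL, hM])]
  ring

/-- The slope `p = y'/t'` of the parametrized curve, in lowest terms. -/
noncomputable def slope (s : ℂ) : ℂ :=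
  -((2 * s + 1) ^ 2 * slopeNum s) /
    (2 * s * (3 * s + 2) ^ 2 * (3 * s ^ 2 + 3 * s + 1) * (3 * s + 1) ^ 2)

theorem deriv_yFun9_div_deriv_tFun9 (hs : s ≠ 0) (hL : 2 * s + 1 ≠ 0) (hM : 3 * s + 1 ≠ 0)
    (hK : 3 * s + 2 ≠ 0) (hb : 3 * s ^ 2 + 3 * s + 1 ≠ 0) :
    deriv yFun9 s / deriv tFun9 s = slope s := by
  rw [(hasDerivAt_yFun9 hL hM).deriv, (hasDerivAt_tFun9 hL).deriv, slope, div_div_div_eq,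
    div_eq_div_iff (by simp [*]) (by simp [*])]
  ring

theorem hasDerivAt_slope (hs : s ≠ 0) (hM : 3 * s + 1 ≠ 0) (hK : 3 * s + 2 ≠ 0)
    (hb : 3 * s ^ 2 + 3 * s + 1 ≠ 0) :
    HasDerivAt slope ((s + 1) * (2 * s + 1) * slopeDerivNum s /
      (2 * s ^ 2 * (3 * s + 2) ^ 3 * (3 * s + 1) ^ 3 * (3 * s ^ 2 + 3 * s + 1) ^ 2)) s := by
  have hnum := (((hasDerivAt_linear 2 1 s).pow 2).mul (hasDerivAt_slopeNum s)).neg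
  have hden := ((((hasDerivAt_id' s).const_mul 2).mul ((hasDerivAt_linear 3 2 s).pow 2)).mul
    (hasDerivAt_quadratic 3 3 1 s)).mul ((hasDerivAt_linear 3 1 s).pow 2)
  refine (hnum.div hden (by simp [*])).congr_deriv ?_
  simp only [Pi.mul_apply, Pi.pow_apply, Pi.neg_apply, slopeNum, slopeDerivNum]
  rw [div_eq_div_iff (by simp [*]) (by simp [*])]
  push_cast
  ring

theorem deriv_yFun9_div_deriv_tFun9_eventuallyEq (hs : s ≠ 0) (hL : 2 * s + 1 ≠ 0)
    (hM : 3 * s + 1 ≠ 0) (hK : 3 * s + 2 ≠ 0) (hb : 3 * s ^ 2 + 3 * s + 1 ≠ 0) :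
    (fun u => deriv yFun9 u / deriv tFun9 u) =ᶠ[nhds s] slope := by
  filter_upwards [eventually_ne_nhds hs, (hasDerivAt_linear 2 1 s).continuousAt.eventually_ne hL,
    (hasDerivAt_linear 3 1 s).continuousAt.eventually_ne hM,
    (hasDerivAt_linear 3 2 s).continuousAt.eventually_ne hK,
    (hasDerivAt_quadratic 3 3 1 s).continuousAt.eventually_ne hb] with u hu hLu hMu hKu hbu
  exact deriv_yFun9_div_deriv_tFun9 hu hLu hMu hKu hbu

end Slope

end PainleveVI

open PainleveVI

/-- Parametric algebraic solution of the sixth Painlevé equation. -/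
theorem stmt_9 (s : ℂ)
    (h1 : 2*s+1 ≠ 0)
    (h2 : 3*s+1 ≠ 0)
    (hdt : deriv tFun9 s ≠ 0)
    (ht0 : tFun9 s ≠ 0) (ht1 : tFun9 s ≠ 1)
    (hy0 : yFun9 s ≠ 0) (hy1 : yFun9 s ≠ 1) (hyt : yFun9 s ≠ tFun9 s) :
    deriv (fun u => deriv yFun9 u / deriv tFun9 u) s / deriv tFun9 s =
      (1/2) * (1/(yFun9 s) + 1/(yFun9 s - 1) + 1/(yFun9 s - tFun9 s)) *
          (deriv yFun9 s / deriv tFun9 s)^2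
        - (1/(tFun9 s) + 1/(tFun9 s - 1) + 1/(yFun9 s - tFun9 s)) *
          (deriv yFun9 s / deriv tFun9 s)
        + (yFun9 s * (yFun9 s - 1) * (yFun9 s - tFun9 s) /
            ((tFun9 s)^2 * (tFun9 s - 1)^2)) *
          ((1/8 : ℂ) + (-1/18 : ℂ) * tFun9 s / (yFun9 s)^2
            + (1/8 : ℂ) * (tFun9 s - 1) / (yFun9 s - 1)^2
            + (4/9 : ℂ) * tFun9 s * (tFun9 s - 1) / (yFun9 s - tFun9 s)^2) := by
  obtain ⟨ha, hb⟩ := (tFun9_ne_zero_iff h1).1 ht0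
  obtain ⟨hs, hK⟩ := (tFun9_ne_one_iff h1).1 ht1
  obtain ⟨hc, -⟩ := (yFun9_ne_zero_iff h1 h2).1 hy0
  obtain ⟨-, hn, -⟩ := (yFun9_ne_one_iff h1 h2).1 hy1
  obtain ⟨-, -, -, hr⟩ := (yFun9_ne_tFun9_iff h1 h2).1 hyt
  rw [(deriv_yFun9_div_deriv_tFun9_eventuallyEq hs h1 h2 hK hb).deriv_eq,
    (hasDerivAt_slope hs h2 hK hb).deriv, deriv_yFun9_div_deriv_tFun9 hs h1 h2 hK hb,
    (hasDerivAt_tFun9 h1).deriv]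
  exact (clearedEquation_factors s).eq_rhs hs hn hK h1 h2 ha hb hc hr rfl (tFun9_sub_one h1) rfl
    (yFun9_sub_one h1 h2) (yFun9_sub_tFun9 h1 h2)
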